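/- arXiv:math/9903192 — 2 statements merged into one kernel-verified Lean document; each statement's English description precedes it below -/
import Mathlib

section
/- For every l ≥ 2 and i ≥ 0: the diagram J_{l,2i} satisfies cod = 2i−1+5l, deg = 3i+6l, dim = i+1+l, r = 3, δ = i+3l, μ = 2i−2+6l; and the diagram J_{l,2i+1} satisfies cod = 2i+5l, deg = 3i+2+6l, dim = i+2+l, r = 2, δ = i+3l, μ = 2i−1+6l. -/
open Classical Finset

/-- The raw data of a finite weighted forest equipped with a proximity relation.
The vertices are the elements of `Fin n`; `parent v` is the immediate predecessor of `v`
(`none` iff `v` is a root); `wt v` is the weight of `v`; and `prox a b` means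
that `a` is proximate to `b`. -/
structure PreDiagram where
  n : ℕ
  parent : Fin n → Option (Fin n)
  wt : Fin n → ℕ
  prox : Fin n → Fin n → Prop

namespace PreDiagram

variable (D : PreDiagram)

/-- `a` is the immediate predecessor of `b`. -/
def ImPred (a b : Fin D.n) : Prop := D.parent b = some a

/-- `a` is a predecessor of `b` (reflexive-transitive closure of `ImPred`). -/
def Pred (a b : Fin D.n) : Prop := Relation.ReflTransGen D.ImPred a b

/-- `a` is a proper predecessor of `b`. -/
def ProperPred (a b : Fin D.n) : Prop := Relation.TransGen D.ImPred a b

/-- `a` is a remote predecessor of `b`: a proper but not immediate predecessor. -/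
def RemotePred (a b : Fin D.n) : Prop := D.ProperPred a b ∧ ¬ D.ImPred a b

def IsRoot (v : Fin D.n) : Prop := D.parent v = none

/-- A leaf is a vertex with no proper successor. -/
def IsLeaf (v : Fin D.n) : Prop := ∀ w, ¬ D.ImPred v w

/-- `a` is remotely proximate to `b`: proximate to `b`, and `b` is a remote predecessor. -/
def RemoteProx (a b : Fin D.n) : Prop := D.prox a b ∧ D.RemotePred b a

/-- A satellite is a vertex proximate to a remote predecessor. -/
def IsSatellite (v : Fin D.n) : Prop := ∃ t, D.RemoteProx v t

/-- A free vertex is one that is not a satellite. -/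
def IsFree (v : Fin D.n) : Prop := ¬ D.IsSatellite v

/-- The laws of a minimal Enriques diagram. -/
structure IsMED : Prop where
  /-- The graph is a forest: no vertex is a proper predecessor of itself. -/
  forest : ∀ v, ¬ D.ProperPred v v
  /-- Every weight is at least `1`. -/
  wt_pos : ∀ v, 1 ≤ D.wt v
  /-- Law of Proximity: a root is proximate to no vertex. -/
  root_not_prox : ∀ v, D.IsRoot v → ∀ w, ¬ D.prox v w
  /-- Law of Proximity: a non-root is proximate to its immediate predecessor. -/
  prox_parent : ∀ v u, D.parent v = some u → D.prox v u
  /-- Law of Proximity: any other vertex a non-root is proximate to is a remote predecessor. -/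
  prox_remote : ∀ v u w, D.parent v = some u → D.prox v w → w ≠ u → D.RemotePred w v
  /-- Law of Proximity: a non-root is proximate to at most one vertex other than its
  immediate predecessor. -/
  prox_unique : ∀ v u w w', D.parent v = some u → D.prox v w → D.prox v w' →
      w ≠ u → w' ≠ u → w = w'
  /-- Law of Proximity: if `a` is proximate to `b` and `c` lies properly between them,
  then `c` is proximate to `b`. -/
  prox_between : ∀ a b c, D.prox a b → D.ProperPred b c → D.ProperPred c a → D.prox c b
  /-- Proximity Inequality. -/
  prox_ineq : ∀ v, ∑ w ∈ univ.filter (fun w => D.prox w v), D.wt w ≤ D.wt v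
  /-- Law of Succession: a vertex `v` has at most `wt v` immediate successors. -/
  succ_card : ∀ v, (univ.filter (fun w => D.ImPred v w)).card ≤ D.wt v
  /-- Law of Succession: at most two immediate successors are satellites. -/
  succ_sat : ∀ v w₁ w₂ w₃, D.ImPred v w₁ → D.ImPred v w₂ → D.ImPred v w₃ →
      D.IsSatellite w₁ → D.IsSatellite w₂ → D.IsSatellite w₃ →
      w₁ ≠ w₂ → w₁ ≠ w₃ → w₂ ≠ w₃ → False
  /-- Law of Succession: two distinct immediate successors of the same vertex cannot be
  satellites of the same vertex. -/
  succ_sat_diff : ∀ v w₁ w₂ t, D.ImPred v w₁ → D.ImPred v w₂ → w₁ ≠ w₂ →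
      D.RemoteProx w₁ t → D.RemoteProx w₂ t → False
  /-- Law of Minimality: every leaf of weight `1` is a satellite. -/
  minimal : ∀ v, D.IsLeaf v → D.wt v = 1 → D.IsSatellite v

/-- The number of roots. -/
noncomputable def rts : ℕ := (univ.filter (fun v => D.IsRoot v)).card

/-- The number of free vertices. -/
noncomputable def frs : ℕ := (univ.filter (fun v => D.IsFree v)).card

/-- `dim D = rts D + frs D`. -/
noncomputable def dimD : ℕ := D.rts + D.frs

/-- `deg D = Σ_V C(m_V + 1, 2)`. -/
def degD : ℕ := ∑ v, (D.wt v + 1).choose 2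

/-- `cod D = deg D - dim D`. -/
noncomputable def cod : ℤ := (D.degD : ℤ) - (D.dimD : ℤ)

/-- `δ(D) = Σ_V C(m_V, 2)`. -/
def deltaD : ℕ := ∑ v, (D.wt v).choose 2

/-- `r(D) = Σ_V (m_V - Σ_{W ≻ V} m_W)`. -/
noncomputable def rCh : ℤ :=
  ∑ v, ((D.wt v : ℤ) - ∑ w ∈ univ.filter (fun w => D.prox w v), (D.wt w : ℤ))

/-- `μ(D) = 2 δ(D) - r(D) + rts D`. -/
noncomputable def mu : ℤ := 2 * (D.deltaD : ℤ) - D.rCh + (D.rts : ℤ)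

/-- An isomorphism of diagrams: a weight-preserving bijection of the vertices preserving
the immediate-predecessor and proximity relations. -/
structure Iso (D₁ D₂ : PreDiagram) where
  toEquiv : Fin D₁.n ≃ Fin D₂.n
  wt_eq : ∀ v, D₂.wt (toEquiv v) = D₁.wt v
  imPred_iff : ∀ a b, D₂.ImPred (toEquiv a) (toEquiv b) ↔ D₁.ImPred a b
  prox_iff : ∀ a b, D₂.prox (toEquiv a) (toEquiv b) ↔ D₁.prox a b

def Isomorphic (D₁ D₂ : PreDiagram) : Prop := Nonempty (Iso D₁ D₂)

/-- A realization of `D'` as a subdiagram of `D`: an injection of the vertices such that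
the weight of a vertex of `D'` is at most its weight in `D`, and the succession
(predecessor) and proximity relations of `D'` are the ones induced from `D`. -/
structure Subdiagram (D' D : PreDiagram) where
  toFun : Fin D'.n → Fin D.n
  inj : Function.Injective toFun
  wt_le : ∀ v, D'.wt v ≤ D.wt (toFun v)
  pred_iff : ∀ a b, D'.Pred a b ↔ D.Pred (toFun a) (toFun b)
  prox_iff : ∀ a b, D'.prox a b ↔ D.prox (toFun a) (toFun b)

def IsSubdiagram (D' D : PreDiagram) : Prop := Nonempty (Subdiagram D' D)

/-- The parent function of a chain `0 → 1 → ⋯ → n-1`. -/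
def chainParent (n : ℕ) (v : Fin n) : Option (Fin n) :=
  if v.val = 0 then none
  else some ⟨v.val - 1, lt_of_le_of_lt (Nat.sub_le _ _) v.isLt⟩

/-- The diagram `A_k` (`k ≥ 1`): for `k = 2i-1`, a chain of `i` free vertices of weight `2`;
for `k = 2i`, such a chain followed by a chain of two vertices of weight `1`, both
proximate to the `i`-th weight-`2` vertex. -/
def diagA (k : ℕ) : PreDiagram where
  n := if k % 2 = 0 then k / 2 + 2 else (k + 1) / 2
  parent := chainParent _
  wt := fun v => if v.val < (k + 1) / 2 then 2 else 1
  prox := fun a b => a.val = b.val + 1 ∨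
    (k % 2 = 0 ∧ a.val = k / 2 + 1 ∧ b.val + 1 = k / 2)

/-- The diagram `D_k` (`k ≥ 4`): a root of weight `3`, followed by nothing if `k = 4`,
by two vertices of weight `1` both proximate to the root if `k = 5`, and by the diagram
`A_{k-5}` if `k ≥ 6`. -/
def diagD (k : ℕ) : PreDiagram where
  n := (k - 4) / 2 + (if k % 2 = 0 then 1 else 3)
  parent := chainParent _
  wt := fun v => if v.val = 0 then 3 else if v.val ≤ (k - 4) / 2 then 2 else 1
  prox := fun a b => a.val = b.val + 1 ∨
    (k % 2 = 1 ∧ a.val = (k - 4) / 2 + 2 ∧ b.val = (k - 4) / 2)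

/-- The diagram `E_{6l+j}` (`l ≥ 1`, `j ∈ {0,1,2}`), with argument `m = 6l + j`. -/
def diagE (m : ℕ) : PreDiagram where
  n := m / 6 + (if m % 6 = 1 then 2 else 3)
  parent := chainParent _
  wt := fun v => if v.val < m / 6 then 3 else
    if 1 ≤ m % 6 ∧ v.val = m / 6 then 2 else 1
  prox := fun a b => a.val = b.val + 1 ∨
    (m % 6 = 0 ∧ (a.val = m / 6 + 1 ∨ a.val = m / 6 + 2) ∧ b.val + 1 = m / 6) ∨
    (m % 6 = 1 ∧ a.val = m / 6 + 1 ∧ b.val + 1 = m / 6) ∨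
    (m % 6 = 2 ∧ ((a.val = m / 6 + 1 ∧ b.val + 1 = m / 6) ∨
                  (a.val = m / 6 + 2 ∧ b.val = m / 6)))

/-- The diagram `J_{l,k}` (`l ≥ 2`, `k ≥ 0`): a chain of `l - 1` free vertices of weight `3`
followed by the diagram `D_{k+4}`. -/
def diagJ (l k : ℕ) : PreDiagram where
  n := (l - 1) + k / 2 + (if k % 2 = 0 then 1 else 3)
  parent := chainParent _
  wt := fun v => if v.val ≤ l - 1 then 3 else if v.val ≤ l - 1 + k / 2 then 2 else 1
  prox := fun a b => a.val = b.val + 1 ∨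
    (k % 2 = 1 ∧ a.val = (l - 1) + k / 2 + 2 ∧ b.val = (l - 1) + k / 2)

/-- The diagram `X_{1,0}`: a single root of weight `4`. -/
def diagX10 : PreDiagram where
  n := 1
  parent := chainParent _
  wt := fun _ => 4
  prox := fun a b => a.val = b.val + 1

/-- The diagram `X_{1,1}`: a root of weight `4` followed by a chain of two vertices of
weight `1`, both proximate to the root. -/
def diagX11 : PreDiagram where
  n := 3
  parent := chainParent _
  wt := fun v => if v.val = 0 then 4 else 1
  prox := fun a b => a.val = b.val + 1 ∨ (a.val = 2 ∧ b.val = 0)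

/-- The diagram `X_{1,2}`: a root of weight `4` followed by one free vertex of weight `2`. -/
def diagX12 : PreDiagram where
  n := 2
  parent := chainParent _
  wt := fun v => if v.val = 0 then 4 else 2
  prox := fun a b => a.val = b.val + 1

/-- The diagram `Z_{11}`: a root of weight `4` followed by a chain of three vertices of
weight `1`, all proximate to the root. -/
def diagZ11 : PreDiagram where
  n := 4
  parent := chainParent _
  wt := fun v => if v.val = 0 then 4 else 1
  prox := fun a b => a.val = b.val + 1 ∨ ((a.val = 2 ∨ a.val = 3) ∧ b.val = 0)

/-- The diagram `Y_{1,1}`: a root of weight `4` with two immediate free successors of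
weight `1`, each of which has one immediate successor of weight `1` that is remotely
proximate to the root. -/
def diagY11 : PreDiagram where
  n := 5
  parent := fun v =>
    if v.val = 0 then none
    else if v.val ≤ 2 then some ⟨0, by omega⟩
    else if v.val = 3 then some ⟨1, by omega⟩
    else some ⟨2, by omega⟩
  wt := fun v => if v.val = 0 then 4 else 1
  prox := fun a b => (a.val = 1 ∧ b.val = 0) ∨ (a.val = 2 ∧ b.val = 0) ∨
    (a.val = 3 ∧ (b.val = 1 ∨ b.val = 0)) ∨ (a.val = 4 ∧ (b.val = 2 ∨ b.val = 0))

/-- The disjoint union of two diagrams. -/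
def disjUnion (D₁ D₂ : PreDiagram) : PreDiagram where
  n := D₁.n + D₂.n
  parent := fun v =>
    if h : v.val < D₁.n then
      (D₁.parent ⟨v.val, h⟩).map
        (fun w => ⟨w.val, Nat.lt_of_lt_of_le w.isLt (Nat.le_add_right _ _)⟩)
    else
      (D₂.parent ⟨v.val - D₁.n, by have := v.isLt; omega⟩).map
        (fun w => ⟨D₁.n + w.val, by have := w.isLt; omega⟩)
  wt := fun v =>
    if h : v.val < D₁.n then D₁.wt ⟨v.val, h⟩
    else D₂.wt ⟨v.val - D₁.n, by have := v.isLt; omega⟩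
  prox := fun a b =>
    (∃ (ha : a.val < D₁.n) (hb : b.val < D₁.n), D₁.prox ⟨a.val, ha⟩ ⟨b.val, hb⟩) ∨
    (∃ (_ : D₁.n ≤ a.val) (_ : D₁.n ≤ b.val),
      D₂.prox ⟨a.val - D₁.n, by have := a.isLt; omega⟩
              ⟨b.val - D₁.n, by have := b.isLt; omega⟩)

end PreDiagram

/-!
By the Law of Proximity a root is proximate to no vertex, a free non-root to exactly one and a
satellite to exactly two. Exchanging the order of summation in `r(D)` therefore leaves the total
weight of the roots minus the total weight of the satellites. The diagram `J_{l,k}` is a chain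
with weights `3, …, 3, 2, …, 2` (`l` and `k / 2` times), extended for odd `k` by two vertices of
weight `1`, the last of which is the only satellite; so `r = 3 - k % 2`, and the other characters
are read off from these multiplicities.
-/

namespace PreDiagram

section

variable {D : PreDiagram}

lemma rCh_eq_sum_mul_card_prox :
    D.rCh = ∑ w, (D.wt w : ℤ) * (1 - #{v | D.prox w v}) := by
  simp only [rCh, Finset.sum_sub_distrib, mul_sub, mul_one, Finset.sum_filter]
  rw [Finset.sum_comm]
  simp only [← Finset.sum_filter, Finset.sum_const, nsmul_eq_mul, mul_comm]

lemma frs_add_card_isSatellite : D.frs + #{v | D.IsSatellite v} = D.n := by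
  have hfree : univ.filter D.IsFree = (univ.filter D.IsSatellite)ᶜ := by
    ext v
    simp [IsFree]
  rw [frs, hfree, Finset.card_compl_add_card, Fintype.card_fin]

lemma IsRoot.not_isSatellite {v : Fin D.n} (hv : D.IsRoot v) : ¬ D.IsSatellite v := by
  rintro ⟨t, -, ht, -⟩
  obtain ⟨u, -, hu⟩ := Relation.TransGen.tail'_iff.mp ht
  simp [ImPred, show D.parent v = none from hv] at hu

lemma sum_prox_le {v : Fin D.n} (c m : ℕ)
    (h : ∀ w, D.prox w v → w.val ∈ Ioc v.val (v.val + c) ∧ D.wt w ≤ m) :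
    ∑ w with D.prox w v, D.wt w ≤ c * m := by
  have hcard : #{w | D.prox w v} ≤ c := by
    simpa using Finset.card_le_card_of_injOn (t := Ioc v.val (v.val + c)) Fin.val
      (fun w hw => (h w (by simpa using hw)).1) Fin.val_injective.injOn
  calc ∑ w with D.prox w v, D.wt w
      ≤ #{w | D.prox w v} * m :=
        Finset.sum_le_card_nsmul _ _ _ fun w hw => (h w (by simpa using hw)).2
    _ ≤ c * m := Nat.mul_le_mul_right m hcard

namespace IsMED

lemma card_prox_of_isRoot (hD : D.IsMED) {v : Fin D.n} (hv : D.IsRoot v) :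
    #{u | D.prox v u} = 0 := by
  simp [hD.root_not_prox v hv]

lemma card_prox_of_isFree (hD : D.IsMED) {v : Fin D.n} (hroot : ¬ D.IsRoot v)
    (hfree : D.IsFree v) : #{u | D.prox v u} = 1 := by
  obtain ⟨p, hp⟩ := Option.ne_none_iff_exists'.mp hroot
  refine Finset.card_eq_one.mpr ⟨p, Finset.ext fun u => ?_⟩
  simp only [mem_filter_univ, mem_singleton]
  constructor
  · intro hu
    by_contra hne
    exact hfree ⟨u, hu, hD.prox_remote v p u hp hu hne⟩
  · rintro rfl
    exact hD.prox_parent v u hp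

lemma card_prox_of_isSatellite (hD : D.IsMED) {v : Fin D.n} (hsat : D.IsSatellite v) :
    #{u | D.prox v u} = 2 := by
  obtain ⟨p, hp⟩ := Option.ne_none_iff_exists'.mp fun hroot => IsRoot.not_isSatellite hroot hsat
  obtain ⟨t, hvt, -, himm⟩ := hsat
  have htp : t ≠ p := by
    rintro rfl
    exact himm hp
  refine Finset.card_eq_two.mpr ⟨t, p, htp, Finset.ext fun u => ?_⟩
  simp only [mem_filter_univ, mem_insert, mem_singleton]
  constructor
  · intro hu
    exact or_iff_not_imp_right.mpr fun hup => hD.prox_unique v p u t hp hu hvt hup htp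
  · rintro (rfl | rfl)
    exacts [hvt, hD.prox_parent v u hp]

lemma rCh_eq_sum_isRoot_sub_sum_isSatellite (hD : D.IsMED) :
    D.rCh = ∑ v with D.IsRoot v, (D.wt v : ℤ) - ∑ v with D.IsSatellite v, (D.wt v : ℤ) := by
  rw [rCh_eq_sum_mul_card_prox, Finset.sum_filter, Finset.sum_filter, ← Finset.sum_sub_distrib]
  refine Finset.sum_congr rfl fun v _ => ?_
  by_cases hroot : D.IsRoot v
  · simp [hD.card_prox_of_isRoot hroot, hroot, hroot.not_isSatellite]
  by_cases hsat : D.IsSatellite v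
  · simp [hD.card_prox_of_isSatellite hsat, hroot, hsat]
  · simp [hD.card_prox_of_isFree hroot hsat, hroot, hsat]

end IsMED

/-- `D` is a single chain `0 → 1 → ⋯ → n - 1`; nothing is required of the weights or of the
proximity relation. -/
def IsChain (D : PreDiagram) : Prop := D.parent = chainParent D.n

namespace IsChain

lemma imPred_iff (h : D.IsChain) {a b : Fin D.n} : D.ImPred a b ↔ b.val = a.val + 1 := by
  rw [ImPred, h]
  unfold chainParent
  split_ifs <;> simp [Fin.ext_iff] <;> omega

lemma isRoot_iff (h : D.IsChain) {v : Fin D.n} : D.IsRoot v ↔ v.val = 0 := by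
  simp [IsRoot, show D.parent = _ from h, chainParent]

lemma properPred_iff (h : D.IsChain) {a b : Fin D.n} : D.ProperPred a b ↔ a < b := by
  constructor
  · intro hab
    refine Relation.transGen_minimal (r' := (· < ·)) (fun x y hxy => ?_) a b hab
    have := h.imPred_iff.mp hxy
    exact Fin.lt_def.mpr (by omega)
  · intro hab
    have path : ∀ m, ∀ hm : m < D.n, a.val < m → D.ProperPred a ⟨m, hm⟩ := by
      intro m hm ham
      induction m, ham using Nat.le_induction with
      | base => exact .single (h.imPred_iff.mpr rfl)
      | succ m _ ih => exact .tail (ih (by omega)) (h.imPred_iff.mpr rfl)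
    exact path b b.isLt hab

lemma remotePred_iff (h : D.IsChain) {a b : Fin D.n} :
    D.RemotePred a b ↔ a.val + 1 < b.val := by
  rw [RemotePred, h.properPred_iff, h.imPred_iff, Fin.lt_def]
  omega

lemma isLeaf_iff (h : D.IsChain) {v : Fin D.n} : D.IsLeaf v ↔ v.val + 1 = D.n := by
  simp only [IsLeaf, h.imPred_iff]
  constructor
  · intro hv
    by_contra hne
    exact hv ⟨v.val + 1, by omega⟩ rfl
  · intro hv w
    omega

lemma isSatellite_iff (h : D.IsChain) {v : Fin D.n} :
    D.IsSatellite v ↔ ∃ t : Fin D.n, D.prox v t ∧ t.val + 1 < v.val := by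
  simp only [IsSatellite, RemoteProx, h.remotePred_iff]

lemma imPred_unique (h : D.IsChain) {v w w' : Fin D.n} (hw : D.ImPred v w)
    (hw' : D.ImPred v w') : w = w' :=
  Fin.ext <| (h.imPred_iff.mp hw).trans (h.imPred_iff.mp hw').symm

lemma filter_isRoot (h : D.IsChain) (hn : 0 < D.n) :
    univ.filter D.IsRoot = {⟨0, hn⟩} := by
  ext v
  simp [h.isRoot_iff, Fin.ext_iff]

lemma rts_eq_one (h : D.IsChain) (hn : 0 < D.n) : D.rts = 1 := by
  rw [rts, h.filter_isRoot hn, card_singleton]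

lemma isMED (h : D.IsChain) (wt_pos : ∀ v, 1 ≤ D.wt v)
    (prox_lt : ∀ a b, D.prox a b → b < a)
    (prox_pred : ∀ a b : Fin D.n, a.val = b.val + 1 → D.prox a b)
    (prox_unique : ∀ a b b' : Fin D.n, D.prox a b → D.prox a b' →
      b.val + 1 < a.val → b'.val + 1 < a.val → b = b')
    (prox_between : ∀ a b c, D.prox a b → b < c → c < a → D.prox c b)
    (prox_ineq : ∀ v, ∑ w with D.prox w v, D.wt w ≤ D.wt v)
    (minimal : ∀ v : Fin D.n, v.val + 1 = D.n → D.wt v = 1 → D.IsSatellite v) : D.IsMED := by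
  have remote_of_prox {v u w : Fin D.n} (hu : D.ImPred u v) (hw : D.prox v w) (hne : w ≠ u) :
      w.val + 1 < v.val := by
    have := h.imPred_iff.mp hu
    have := Fin.lt_def.mp (prox_lt v w hw)
    have := Fin.val_ne_of_ne hne
    omega
  exact
    { forest := fun v hv => (h.properPred_iff.mp hv).false
      wt_pos
      root_not_prox := fun v hv w hw => by
        have := h.isRoot_iff.mp hv
        have := Fin.lt_def.mp (prox_lt v w hw)
        omega
      prox_parent := fun v u hu => prox_pred v u (h.imPred_iff.mp hu)
      prox_remote := fun v u w hu hw hne => h.remotePred_iff.mpr (remote_of_prox hu hw hne)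
      prox_unique := fun v u w w' hu hw hw' hne hne' =>
        prox_unique v w w' hw hw' (remote_of_prox hu hw hne) (remote_of_prox hu hw' hne')
      prox_between := fun a b c hab hbc hca =>
        prox_between a b c hab (h.properPred_iff.mp hbc) (h.properPred_iff.mp hca)
      prox_ineq
      succ_card := fun v => (Finset.card_le_one.mpr fun w hw w' hw' =>
        h.imPred_unique (by simpa using hw) (by simpa using hw')).trans (wt_pos v)
      succ_sat := fun v w₁ w₂ w₃ h₁ h₂ _ _ _ _ hne _ _ => hne (h.imPred_unique h₁ h₂)
      succ_sat_diff := fun v w₁ w₂ t h₁ h₂ hne _ _ => hne (h.imPred_unique h₁ h₂)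
      minimal := fun v hv => minimal v (h.isLeaf_iff.mp hv) }

end IsChain

end

section DiagJ

variable (l k : ℕ)

lemma isChain_diagJ : (diagJ l k).IsChain := rfl

lemma n_diagJ : (diagJ l k).n = l - 1 + k / 2 + 1 + 2 * (k % 2) := by
  simp only [diagJ]
  split_ifs <;> omega

variable {l k}

lemma wt_diagJ (v : Fin (diagJ l k).n) :
    (diagJ l k).wt v = if v.val ≤ l - 1 then 3 else if v.val ≤ l - 1 + k / 2 then 2 else 1 :=
  rfl

lemma prox_diagJ_iff {a b : Fin (diagJ l k).n} :
    (diagJ l k).prox a b ↔ a.val = b.val + 1 ∨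
      (k % 2 = 1 ∧ a.val = l - 1 + k / 2 + 2 ∧ b.val = l - 1 + k / 2) := Iff.rfl

lemma isSatellite_diagJ_iff {v : Fin (diagJ l k).n} :
    (diagJ l k).IsSatellite v ↔ k % 2 = 1 ∧ v.val = l - 1 + k / 2 + 2 := by
  simp only [(isChain_diagJ l k).isSatellite_iff, prox_diagJ_iff]
  constructor
  · rintro ⟨t, hvt, hlt⟩
    omega
  · rintro ⟨hk, hv⟩
    have := v.isLt
    exact ⟨⟨l - 1 + k / 2, by omega⟩, .inr ⟨hk, hv, rfl⟩, by simp only; omega⟩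

lemma antitone_wt_diagJ : Antitone (diagJ l k).wt := by
  intro a b hab
  have := Fin.le_def.mp hab
  simp only [wt_diagJ]
  split_ifs <;> omega

lemma sum_prox_diagJ_le (v : Fin (diagJ l k).n) :
    ∑ w with (diagJ l k).prox w v, (diagJ l k).wt w ≤ (diagJ l k).wt v := by
  by_cases hv : v.val = l - 1 + k / 2
  · have two_le : 2 ≤ (diagJ l k).wt v := by
      rw [wt_diagJ]
      split_ifs <;> omega
    refine (sum_prox_le 2 1 fun w hw => ?_).trans two_le
    rw [prox_diagJ_iff] at hw
    rw [mem_Ioc, wt_diagJ, if_neg (by omega), if_neg (by omega)]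
    omega
  · refine (sum_prox_le 1 ((diagJ l k).wt v) fun w hw => ?_).trans (one_mul _).le
    have hwv : w.val = v.val + 1 := (prox_diagJ_iff.mp hw).resolve_right fun h => hv h.2.2
    exact ⟨mem_Ioc.mpr (by omega), antitone_wt_diagJ (Fin.le_def.mpr (by omega))⟩

variable (l k)

lemma isMED_diagJ : (diagJ l k).IsMED := by
  refine (isChain_diagJ l k).isMED (fun v => ?_) (fun a b hab => ?_) (fun a b hab => .inl hab)
    (fun a b b' hab hab' hlt hlt' => ?_) (fun a b c hab hbc hca => ?_) sum_prox_diagJ_le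
    (fun v hv hwt => ?_)
  · rw [wt_diagJ]
    split_ifs <;> omega
  · rw [prox_diagJ_iff] at hab
    rw [Fin.lt_def]
    omega
  · rw [prox_diagJ_iff] at hab hab'
    exact Fin.ext (by omega)
  · rw [Fin.lt_def] at hbc hca
    rw [prox_diagJ_iff] at hab ⊢
    omega
  · have hn := n_diagJ l k
    rw [wt_diagJ] at hwt
    rw [isSatellite_diagJ_iff]
    split_ifs at hwt <;> omega

lemma n_diagJ_pos : 0 < (diagJ l k).n := by
  rw [n_diagJ]
  omega

lemma sum_isSatellite_diagJ {M : Type*} [AddCommMonoid M] (F : ℕ → M) :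
    ∑ v with (diagJ l k).IsSatellite v, F ((diagJ l k).wt v) = (k % 2) • F 1 := by
  simp only [isSatellite_diagJ_iff]
  rcases Nat.mod_two_eq_zero_or_one k with hk | hk
  · simp [hk]
  · have hlt : l - 1 + k / 2 + 2 < (diagJ l k).n := by
      rw [n_diagJ]
      omega
    have hsat : univ.filter (fun v : Fin (diagJ l k).n => k % 2 = 1 ∧ v.val = l - 1 + k / 2 + 2) =
        {⟨l - 1 + k / 2 + 2, hlt⟩} := by
      ext v
      simp [hk, Fin.ext_iff]
    rw [hsat, Finset.sum_singleton, wt_diagJ, if_neg (by simp only; omega),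
      if_neg (by simp only; omega), hk, one_smul]

lemma rts_diagJ : (diagJ l k).rts = 1 :=
  (isChain_diagJ l k).rts_eq_one (n_diagJ_pos l k)

lemma card_isSatellite_diagJ : #{v | (diagJ l k).IsSatellite v} = k % 2 := by
  simpa using sum_isSatellite_diagJ l k fun _ => (1 : ℕ)

lemma rCh_diagJ : (diagJ l k).rCh = 3 - (k % 2 : ℕ) := by
  have hroot : ∑ v with (diagJ l k).IsRoot v, ((diagJ l k).wt v : ℤ) = 3 := by
    simp [(isChain_diagJ l k).filter_isRoot (n_diagJ_pos l k), wt_diagJ]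
  rw [(isMED_diagJ l k).rCh_eq_sum_isRoot_sub_sum_isSatellite, hroot,
    sum_isSatellite_diagJ l k Nat.cast]
  simp

variable {l}

lemma sum_wt_diagJ {M : Type*} [AddCommMonoid M] (hl : 1 ≤ l) (F : ℕ → M) :
    ∑ v, F ((diagJ l k).wt v) = l • F 3 + (k / 2) • F 2 + (2 * (k % 2)) • F 1 := by
  have hn : (diagJ l k).n = l + k / 2 + 2 * (k % 2) := by
    rw [n_diagJ]
    omega
  have sum_block {m : ℕ} {f : ℕ → M} {c : M} (h : ∀ x < m, f x = c) :
      ∑ x ∈ range m, f x = m • c := by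
    simpa using Finset.sum_eq_card_nsmul (s := range m) fun x hx => h x (mem_range.mp hx)
  simp only [wt_diagJ]
  rw [Fin.sum_univ_eq_sum_range
      (fun v => F (if v ≤ l - 1 then 3 else if v ≤ l - 1 + k / 2 then 2 else 1)), hn,
    Finset.sum_range_add, Finset.sum_range_add]
  congr 1
  · congr 1
    · exact sum_block fun x hx => by rw [if_pos (by omega)]
    · exact sum_block fun x hx => by rw [if_neg (by omega), if_pos (by omega)]
  · exact sum_block fun x _ => by rw [if_neg (by omega), if_neg (by omega)]

lemma degD_diagJ (hl : 1 ≤ l) : (diagJ l k).degD = 6 * l + 3 * (k / 2) + 2 * (k % 2) := by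
  rw [degD, sum_wt_diagJ k hl fun m => (m + 1).choose 2]
  simp [Nat.choose, mul_comm]

lemma deltaD_diagJ (hl : 1 ≤ l) : (diagJ l k).deltaD = 3 * l + k / 2 := by
  rw [deltaD, sum_wt_diagJ k hl fun m => m.choose 2]
  simp [Nat.choose, mul_comm]

lemma dimD_diagJ (hl : 1 ≤ l) : (diagJ l k).dimD = l + k / 2 + 1 + k % 2 := by
  have hfrs := frs_add_card_isSatellite (D := diagJ l k)
  rw [card_isSatellite_diagJ, n_diagJ] at hfrs
  rw [dimD, rts_diagJ]
  omega

lemma cod_diagJ (hl : 1 ≤ l) : (diagJ l k).cod = 5 * l + k - 1 := by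
  rw [cod, degD_diagJ k hl, dimD_diagJ k hl]
  omega

lemma mu_diagJ (hl : 1 ≤ l) : (diagJ l k).mu = 6 * l + k - 2 := by
  rw [mu, deltaD_diagJ k hl, rCh_diagJ, rts_diagJ]
  omega

end DiagJ

end PreDiagram

open PreDiagram in
/-- For `l = 1` the diagram `diagJ 1 k` is `D_{k+4}`. -/
theorem statement11_general (l k : ℕ) (hl : 1 ≤ l) :
    (diagJ l k).cod = 5 * (l : ℤ) + k - 1 ∧
    (diagJ l k).degD = 6 * l + 3 * (k / 2) + 2 * (k % 2) ∧
    (diagJ l k).dimD = l + k / 2 + 1 + k % 2 ∧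
    (diagJ l k).rCh = 3 - (k % 2 : ℕ) ∧
    (diagJ l k).deltaD = 3 * l + k / 2 ∧
    (diagJ l k).mu = 6 * (l : ℤ) + k - 2 :=
  ⟨cod_diagJ k hl, degD_diagJ k hl, dimD_diagJ k hl, rCh_diagJ l k, deltaD_diagJ k hl,
    mu_diagJ k hl⟩

open PreDiagram in
/-- Characters of the diagrams `J_{l,2i}` and `J_{l,2i+1}` for `l ≥ 2`, `i ≥ 0`
(Table 2-1). -/
theorem statement11 (l i : ℕ) (hl : 2 ≤ l) :
    ((diagJ l (2 * i)).cod = 2 * (i : ℤ) - 1 + 5 * (l : ℤ) ∧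
     (diagJ l (2 * i)).degD = 3 * i + 6 * l ∧
     (diagJ l (2 * i)).dimD = i + 1 + l ∧
     (diagJ l (2 * i)).rCh = 3 ∧
     (diagJ l (2 * i)).deltaD = i + 3 * l ∧
     (diagJ l (2 * i)).mu = 2 * (i : ℤ) - 2 + 6 * (l : ℤ)) ∧
    ((diagJ l (2 * i + 1)).cod = 2 * (i : ℤ) + 5 * (l : ℤ) ∧
     (diagJ l (2 * i + 1)).degD = 3 * i + 2 + 6 * l ∧
     (diagJ l (2 * i + 1)).dimD = i + 2 + l ∧
     (diagJ l (2 * i + 1)).rCh = 2 ∧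
     (diagJ l (2 * i + 1)).deltaD = i + 3 * l ∧
     (diagJ l (2 * i + 1)).mu = 2 * (i : ℤ) - 1 + 6 * (l : ℤ)) := by
  have even := statement11_general l (2 * i) (by omega)
  have odd := statement11_general l (2 * i + 1) (by omega)
  omega
end

section
/- Every minimal Enriques diagram D with cod(D) ≤ 10 satisfies the two inequalities μ(D) − 1 ≤ cod(D) and deg(D) ≤ 3·cod(D). -/
open Classical Finset

/-!
Let `p` be the number of vertices a vertex is proximate to: `0` for a root, `1` for any other free
vertex, `2` for a satellite. A vertex of weight `m` contributes `C(m + 1, 2) + p - 2` to `cod D`,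
and exactly `C(m + p - 2, 2)` to `μ(D) - cod(D)`. Weights do not increase along the forest, so a
large weight anywhere forces a large weight, hence a large codimension, at a root; two vertices
contributing to `μ(D) - cod(D)`, or one contributing more than `1`, already cost codimension `13`.
For the degree, every vertex has degree at most three times its codimension except a free vertex of
weight `1`, and each of those is the immediate predecessor of a satellite, which has room to spare.
-/

namespace PreDiagram

variable {D : PreDiagram} {u v w t : Fin D.n}

/-- The number of vertices to which `v` is proximate. -/
noncomputable def numProx (D : PreDiagram) (v : Fin D.n) : ℕ := #{w | D.prox v w}

/-- The contribution of the vertex `v` to `cod D`. The subtraction never truncates in a minimal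
Enriques diagram, see `IsMED.vertexCod_add_two`. -/
noncomputable def vertexCod (D : PreDiagram) (v : Fin D.n) : ℕ :=
  (D.wt v + 1).choose 2 + D.numProx v - 2

/-- The weight of `v` lowered by `2` at a root and by `1` at any other free vertex, so that `v`
contributes `C(reducedWt v, 2)` to `μ(D) - cod(D)`. The subtraction never truncates in a minimal
Enriques diagram, see `IsMED.reducedWt_add_two`. -/
noncomputable def reducedWt (D : PreDiagram) (v : Fin D.n) : ℕ := D.wt v + D.numProx v - 2

theorem choose_succ_two (n : ℕ) : (n + 1).choose 2 = n.choose 2 + n := by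
  rw [Nat.choose_succ_succ', Nat.choose_one_right, add_comm]

theorem exists_imPred_of_not_isRoot (h : ¬ D.IsRoot v) : ∃ u, D.ImPred u v :=
  Option.ne_none_iff_exists'.1 h

theorem ImPred.left_unique (hu : D.ImPred u v) (hw : D.ImPred w v) : u = w :=
  Option.some.inj (hu.symm.trans hw)

theorem RemotePred.properPred_of_imPred (ht : D.RemotePred t v) (hu : D.ImPred u v) :
    D.ProperPred t u := by
  obtain ⟨c, htc, hcv⟩ := Relation.TransGen.tail'_iff.1 ht.1
  obtain rfl := hcv.left_unique hu
  rcases Relation.reflTransGen_iff_eq_or_transGen.1 htc with rfl | htc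
  · exact absurd hu ht.2
  · exact htc

theorem numProx_pos (h : D.prox v w) : 0 < D.numProx v :=
  card_pos.2 ⟨w, by simpa using h⟩

theorem rCh_eq_sum : D.rCh = ∑ v, (D.wt v : ℤ) * (1 - D.numProx v) := by
  have double_count : ∑ v, ∑ w ∈ univ.filter (fun w => D.prox w v), (D.wt w : ℤ) =
      ∑ w, (D.wt w : ℤ) * D.numProx w := by
    simp_rw [sum_filter]
    rw [sum_comm]
    refine sum_congr rfl fun w _ => ?_
    rw [← sum_filter, sum_const, numProx, nsmul_eq_mul, mul_comm]
  rw [rCh, sum_sub_distrib, double_count, ← sum_sub_distrib]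
  exact sum_congr rfl fun v _ => by ring

namespace IsMED

theorem wt_le_of_imPred (hD : D.IsMED) (h : D.ImPred u v) : D.wt v ≤ D.wt u :=
  (single_le_sum (f := D.wt) (fun _ _ => Nat.zero_le _)
    (by simpa using hD.prox_parent v u h)).trans (hD.prox_ineq u)

theorem wt_add_wt_le (hD : D.IsMED) (huv : u ≠ v) (hu : D.prox u t) (hv : D.prox v t) :
    D.wt u + D.wt v ≤ D.wt t := by
  rw [← sum_pair huv]
  refine (sum_le_sum_of_subset fun x hx => ?_).trans (hD.prox_ineq t)
  rcases mem_insert.1 hx with rfl | hx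
  · simpa using hu
  · simpa [mem_singleton.1 hx] using hv

theorem ne_of_imPred (hD : D.IsMED) (h : D.ImPred u v) : u ≠ v := by
  rintro rfl
  exact hD.forest u (.single h)

theorem wellFounded_properPred (hD : D.IsMED) : WellFounded D.ProperPred :=
  have : IsTrans _ D.ProperPred := ⟨fun _ _ _ => Relation.TransGen.trans⟩
  have : Std.Irrefl D.ProperPred := ⟨hD.forest⟩
  Finite.wellFounded_of_trans_of_irrefl _

theorem wellFounded_swap_properPred (hD : D.IsMED) :
    WellFounded (Function.swap D.ProperPred) :=
  have : IsTrans _ (Function.swap D.ProperPred) := ⟨fun _ _ _ h h' => h'.trans h⟩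
  have : Std.Irrefl (Function.swap D.ProperPred) := ⟨hD.forest⟩
  Finite.wellFounded_of_trans_of_irrefl _

theorem exists_isRoot_wt_le (hD : D.IsMED) (v : Fin D.n) :
    ∃ r, D.IsRoot r ∧ D.wt v ≤ D.wt r := by
  induction v using hD.wellFounded_properPred.induction with
  | _ v ih =>
    by_cases hv : D.IsRoot v
    · exact ⟨v, hv, le_rfl⟩
    · obtain ⟨u, hu⟩ := exists_imPred_of_not_isRoot hv
      obtain ⟨r, hr, hur⟩ := ih u (.single hu)
      exact ⟨r, hr, (hD.wt_le_of_imPred hu).trans hur⟩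

theorem prox_of_imPred_of_remoteProx (hD : D.IsMED) (hu : D.ImPred u v) (ht : D.RemoteProx v t) :
    D.prox u t :=
  hD.prox_between v t u ht.1 (ht.2.properPred_of_imPred hu) (.single hu)

theorem eq_or_remoteProx_of_prox (hD : D.IsMED) (hu : D.ImPred u v) (hw : D.prox v w) :
    w = u ∨ D.RemoteProx v w :=
  or_iff_not_imp_left.2 fun hne => ⟨hw, hD.prox_remote v u w hu hw hne⟩

theorem isFree_of_isRoot (hD : D.IsMED) (h : D.IsRoot v) : D.IsFree v :=
  fun ⟨t, ht⟩ => hD.root_not_prox v h t ht.1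

theorem exists_isSatellite_of_isFree_of_wt_eq_one (hD : D.IsMED) (hv : D.IsFree v)
    (hwt : D.wt v = 1) : ∃ w, D.ImPred v w ∧ D.IsSatellite w := by
  induction v using hD.wellFounded_swap_properPred.induction with
  | _ v ih =>
    obtain ⟨w, hvw⟩ : ∃ w, D.ImPred v w := by
      by_contra! hleaf
      exact hv (hD.minimal v hleaf hwt)
    refine ⟨w, hvw, by_contra fun hw => ?_⟩
    have hwt_w : D.wt w = 1 := le_antisymm (hwt ▸ hD.wt_le_of_imPred hvw) (hD.wt_pos w)
    -- A free `w` would precede a satellite `x`, and be proximate to whatever `x` is satellite of.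
    obtain ⟨x, hwx, t, hxt⟩ := ih w (.single hvw) hw hwt_w
    have hwt_prox : D.prox w t := hD.prox_of_imPred_of_remoteProx hwx hxt
    rcases hD.eq_or_remoteProx_of_prox hvw hwt_prox with rfl | hremote
    · have := hD.wt_add_wt_le (hD.ne_of_imPred hwx) hwt_prox hxt.1
      have := hD.wt_pos x
      omega
    · exact hw ⟨t, hremote⟩

theorem two_le_wt_of_isRoot (hD : D.IsMED) (hv : D.IsRoot v) : 2 ≤ D.wt v := by
  have hpos := hD.wt_pos v
  by_contra hlt
  obtain ⟨w, hvw, t, hwt⟩ :=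
    hD.exists_isSatellite_of_isFree_of_wt_eq_one (hD.isFree_of_isRoot hv) (by omega)
  exact hD.root_not_prox v hv t (hD.prox_of_imPred_of_remoteProx hvw hwt)

theorem numProx_of_isRoot (hD : D.IsMED) (h : D.IsRoot v) : D.numProx v = 0 :=
  card_eq_zero.2 (filter_eq_empty_iff.2 fun w _ => hD.root_not_prox v h w)

theorem numProx_of_isFree (hD : D.IsMED) (hr : ¬ D.IsRoot v) (hf : D.IsFree v) :
    D.numProx v = 1 := by
  obtain ⟨u, hu⟩ := exists_imPred_of_not_isRoot hr
  refine card_eq_one.2 ⟨u, ext fun w => ?_⟩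
  simp only [mem_filter, mem_univ, true_and, mem_singleton]
  constructor
  · exact fun hw => (hD.eq_or_remoteProx_of_prox hu hw).resolve_right fun h => hf ⟨w, h⟩
  · rintro rfl
    exact hD.prox_parent v _ hu

theorem numProx_of_isSatellite (hD : D.IsMED) (h : D.IsSatellite v) : D.numProx v = 2 := by
  obtain ⟨u, hu⟩ := exists_imPred_of_not_isRoot fun hr => hD.isFree_of_isRoot hr h
  obtain ⟨t, ht⟩ := h
  have remote_ne {w : Fin D.n} (hw : D.RemoteProx v w) : w ≠ u := by
    rintro rfl
    exact hw.2.2 hu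
  refine card_eq_two.2 ⟨u, t, (remote_ne ht).symm, ext fun w => ?_⟩
  simp only [mem_filter, mem_univ, true_and, mem_insert, mem_singleton]
  constructor
  · exact fun hw => (hD.eq_or_remoteProx_of_prox hu hw).imp_right fun h =>
      hD.prox_unique v u w t hu hw ht.1 (remote_ne h) (remote_ne ht)
  · rintro (rfl | rfl)
    exacts [hD.prox_parent v _ hu, ht.1]

theorem vertex_trichotomy (hD : D.IsMED) (v : Fin D.n) :
    (D.IsRoot v ∧ D.IsFree v ∧ D.numProx v = 0 ∧ 2 ≤ D.wt v) ∨
      (¬ D.IsRoot v ∧ D.IsFree v ∧ D.numProx v = 1 ∧ 1 ≤ D.wt v) ∨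
      (¬ D.IsRoot v ∧ D.IsSatellite v ∧ D.numProx v = 2 ∧ 1 ≤ D.wt v) := by
  by_cases hr : D.IsRoot v
  · exact .inl ⟨hr, hD.isFree_of_isRoot hr, hD.numProx_of_isRoot hr, hD.two_le_wt_of_isRoot hr⟩
  by_cases hf : D.IsFree v
  · exact .inr (.inl ⟨hr, hf, hD.numProx_of_isFree hr hf, hD.wt_pos v⟩)
  · have hs : D.IsSatellite v := not_not.1 hf
    exact .inr (.inr ⟨hr, hs, hD.numProx_of_isSatellite hs, hD.wt_pos v⟩)

theorem reducedWt_add_two (hD : D.IsMED) (v : Fin D.n) :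
    D.reducedWt v + 2 = D.wt v + D.numProx v := by
  rw [reducedWt]
  rcases hD.vertex_trichotomy v with ⟨-, -, _, _⟩ | ⟨-, -, _, _⟩ | ⟨-, -, _, _⟩ <;> omega

theorem vertexCod_add_two (hD : D.IsMED) (v : Fin D.n) :
    D.vertexCod v + 2 = (D.wt v + 1).choose 2 + D.numProx v := by
  have hred := hD.reducedWt_add_two v
  have hchoose : D.wt v ≤ (D.wt v + 1).choose 2 := by simp [choose_succ_two]
  rw [vertexCod]
  omega

theorem dimD_eq_sum (hD : D.IsMED) : (D.dimD : ℤ) = ∑ v, (2 - D.numProx v : ℤ) := by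
  rw [dimD, rts, frs, card_filter, card_filter, ← sum_add_distrib]
  push_cast
  refine sum_congr rfl fun v _ => ?_
  rcases hD.vertex_trichotomy v with ⟨hr, hf, hp, -⟩ | ⟨hr, hf, hp, -⟩ | ⟨hr, hs, hp, -⟩
  · simp [hr, hf, hp]
  · simp [hr, hf, hp]
  · simp [hr, hs, hp, IsFree]

theorem cod_eq_sum (hD : D.IsMED) : D.cod = ∑ v, (D.vertexCod v : ℤ) := by
  rw [cod, hD.dimD_eq_sum, degD]
  push_cast
  rw [← sum_sub_distrib]
  refine sum_congr rfl fun v _ => ?_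
  have := hD.vertexCod_add_two v
  omega

theorem sum_vertexCod_le_cod (hD : D.IsMED) (s : Finset (Fin D.n)) :
    ((∑ v ∈ s, D.vertexCod v : ℕ) : ℤ) ≤ D.cod := by
  rw [hD.cod_eq_sum]
  exact_mod_cast sum_le_sum_of_subset (subset_univ s)

theorem choose_reducedWt_add_vertexCod (hD : D.IsMED) (v : Fin D.n) :
    ((D.reducedWt v).choose 2 + D.vertexCod v : ℤ) =
      2 * (D.wt v).choose 2 - D.wt v * (1 - D.numProx v) + if D.IsRoot v then 1 else 0 := by
  have hcod := hD.vertexCod_add_two v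
  have hred := hD.reducedWt_add_two v
  rcases hD.vertex_trichotomy v with ⟨hr, -, hp, hm⟩ | ⟨hr, -, hp, hm⟩ | ⟨hr, -, hp, hm⟩ <;>
  rw [hp] at hcod hred ⊢ <;>
  simp only [hr, if_true, if_false]
  · have hm : D.wt v = D.reducedWt v + 2 := by omega
    simp only [hm, choose_succ_two] at hcod ⊢
    push_cast
    omega
  · have hm : D.wt v = D.reducedWt v + 1 := by omega
    simp only [hm, choose_succ_two] at hcod ⊢
    push_cast
    omega
  · have hm : D.wt v = D.reducedWt v := by omega
    simp only [hm, choose_succ_two] at hcod ⊢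
    push_cast
    omega

theorem mu_eq_cod_add_sum (hD : D.IsMED) :
    D.mu = D.cod + ∑ v, ((D.reducedWt v).choose 2 : ℤ) := by
  rw [mu, rCh_eq_sum, rts, card_filter, deltaD, hD.cod_eq_sum, add_comm (∑ v, _),
    ← sum_add_distrib]
  push_cast
  rw [mul_sum, ← sum_sub_distrib, ← sum_add_distrib]
  exact sum_congr rfl fun v _ => (hD.choose_reducedWt_add_vertexCod v).symm

theorem choose_add_numProx_le_vertexCod_add_two (hD : D.IsMED) {k : ℕ} (hk : k ≤ D.wt v) :
    (k + 1).choose 2 + D.numProx v ≤ D.vertexCod v + 2 := by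
  rw [hD.vertexCod_add_two]
  gcongr

theorem wt_eq_one_of_isSatellite (hD : D.IsMED) (hcod : D.cod ≤ 12) (hv : D.IsSatellite v) :
    D.wt v = 1 := by
  have hpos := hD.wt_pos v
  by_contra hne
  -- `v`, its immediate predecessor `u` and a root above `t` would cost at least `3 + 2 + 8`.
  have hv_not_root : ¬ D.IsRoot v := fun hr => hD.isFree_of_isRoot hr hv
  obtain ⟨u, hu⟩ := exists_imPred_of_not_isRoot hv_not_root
  have hnumProx := hD.numProx_of_isSatellite hv
  obtain ⟨t, ht⟩ := hv
  have hut : D.prox u t := hD.prox_of_imPred_of_remoteProx hu ht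
  have huv : u ≠ v := hD.ne_of_imPred hu
  have hwt_u : D.wt v ≤ D.wt u := hD.wt_le_of_imPred hu
  have hwt_t : D.wt u + D.wt v ≤ D.wt t := hD.wt_add_wt_le huv hut ht.1
  obtain ⟨r, hr, htr⟩ := hD.exists_isRoot_wt_le t
  have hrv : r ≠ v := by
    rintro rfl
    exact hv_not_root hr
  have hru : r ≠ u := by
    rintro rfl
    exact hD.root_not_prox r hr t hut
  have cod_v : 3 + D.numProx v ≤ D.vertexCod v + 2 :=
    hD.choose_add_numProx_le_vertexCod_add_two (k := 2) (by omega)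
  have cod_u : 3 + D.numProx u ≤ D.vertexCod u + 2 :=
    hD.choose_add_numProx_le_vertexCod_add_two (k := 2) (by omega)
  have cod_r : 10 + D.numProx r ≤ D.vertexCod r + 2 :=
    hD.choose_add_numProx_le_vertexCod_add_two (k := 4) (by omega)
  have hbudget := hD.sum_vertexCod_le_cod {r, u, v}
  rw [sum_insert (by simp [hru, hrv]), sum_pair huv] at hbudget
  have := numProx_pos hut
  omega

theorem numProx_le_one_of_two_le_reducedWt (hD : D.IsMED) (hcod : D.cod ≤ 12)
    (hv : 2 ≤ D.reducedWt v) : D.numProx v ≤ 1 := by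
  have hred := hD.reducedWt_add_two v
  rcases hD.vertex_trichotomy v with ⟨-, -, hp, -⟩ | ⟨-, -, hp, -⟩ | ⟨-, hs, hp, -⟩
  · omega
  · omega
  · have := hD.wt_eq_one_of_isSatellite hcod hs
    omega

theorem five_le_vertexCod (hD : D.IsMED) (hcod : D.cod ≤ 12) (hv : 2 ≤ D.reducedWt v) :
    5 ≤ D.vertexCod v := by
  have hp := hD.numProx_le_one_of_two_le_reducedWt hcod hv
  have hred := hD.reducedWt_add_two v
  rcases Nat.le_one_iff_eq_zero_or_eq_one.1 hp with hp | hp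
  · have : 10 + D.numProx v ≤ D.vertexCod v + 2 :=
      hD.choose_add_numProx_le_vertexCod_add_two (k := 4) (by omega)
    omega
  · have : 6 + D.numProx v ≤ D.vertexCod v + 2 :=
      hD.choose_add_numProx_le_vertexCod_add_two (k := 3) (by omega)
    omega

theorem eight_le_vertexCod_of_isRoot (hD : D.IsMED) (hr : D.IsRoot v) (hv : 2 ≤ D.reducedWt v) :
    8 ≤ D.vertexCod v := by
  have hp := hD.numProx_of_isRoot hr
  have hred := hD.reducedWt_add_two v
  have : 10 + D.numProx v ≤ D.vertexCod v + 2 :=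
    hD.choose_add_numProx_le_vertexCod_add_two (k := 4) (by omega)
  omega

theorem exists_isRoot_four_le_vertexCod (hD : D.IsMED) (hv : 3 ≤ D.wt v) :
    ∃ r, D.IsRoot r ∧ 4 ≤ D.vertexCod r := by
  obtain ⟨r, hr, hvr⟩ := hD.exists_isRoot_wt_le v
  have : 6 + D.numProx r ≤ D.vertexCod r + 2 :=
    hD.choose_add_numProx_le_vertexCod_add_two (k := 3) (hv.trans hvr)
  exact ⟨r, hr, by omega⟩

theorem reducedWt_le_two (hD : D.IsMED) (hcod : D.cod ≤ 12) (v : Fin D.n) :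
    D.reducedWt v ≤ 2 := by
  by_contra! hv
  have hp := hD.numProx_le_one_of_two_le_reducedWt hcod hv.le
  have hred := hD.reducedWt_add_two v
  rcases Nat.le_one_iff_eq_zero_or_eq_one.1 hp with hp | hp
  · have cod_v : 15 + D.numProx v ≤ D.vertexCod v + 2 :=
      hD.choose_add_numProx_le_vertexCod_add_two (k := 5) (by omega)
    have hbudget := hD.sum_vertexCod_le_cod {v}
    rw [sum_singleton] at hbudget
    omega
  · have cod_v : 10 + D.numProx v ≤ D.vertexCod v + 2 :=
      hD.choose_add_numProx_le_vertexCod_add_two (k := 4) (by omega)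
    obtain ⟨r, hr, cod_r⟩ := hD.exists_isRoot_four_le_vertexCod (v := v) (by omega)
    have hrv : r ≠ v := by
      rintro rfl
      have := hD.numProx_of_isRoot hr
      omega
    have hbudget := hD.sum_vertexCod_le_cod {r, v}
    rw [sum_pair hrv] at hbudget
    omega

theorem eq_of_two_le_reducedWt (hD : D.IsMED) (hcod : D.cod ≤ 12) (hv : 2 ≤ D.reducedWt v)
    (hw : 2 ≤ D.reducedWt w) : v = w := by
  by_contra hvw
  have cod_v := hD.five_le_vertexCod hcod hv
  have cod_w := hD.five_le_vertexCod hcod hw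
  have hp := hD.numProx_le_one_of_two_le_reducedWt hcod hv
  have hred := hD.reducedWt_add_two v
  obtain ⟨r, hr, cod_r⟩ := hD.exists_isRoot_four_le_vertexCod (v := v) (by omega)
  have hpair := hD.sum_vertexCod_le_cod {v, w}
  rw [sum_pair hvw] at hpair
  rcases eq_or_ne r v with rfl | hrv
  · have := hD.eight_le_vertexCod_of_isRoot hr hv
    omega
  rcases eq_or_ne r w with rfl | hrw
  · have := hD.eight_le_vertexCod_of_isRoot hr hw
    omega
  have hbudget := hD.sum_vertexCod_le_cod {r, v, w}
  rw [sum_insert (by simp [hrv, hrw]), sum_pair hvw] at hbudget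
  omega

theorem sum_choose_reducedWt_le_one (hD : D.IsMED) (hcod : D.cod ≤ 12) :
    ∑ v, (D.reducedWt v).choose 2 ≤ 1 := by
  have choose_eq_ite (v : Fin D.n) :
      (D.reducedWt v).choose 2 = if 2 ≤ D.reducedWt v then 1 else 0 := by
    have hle := hD.reducedWt_le_two hcod v
    interval_cases D.reducedWt v <;> rfl
  simp_rw [choose_eq_ite, ← card_filter]
  refine card_le_one.2 fun v hv w hw => ?_
  exact hD.eq_of_two_le_reducedWt hcod (mem_filter.1 hv).2 (mem_filter.1 hw).2

theorem mu_sub_one_le_cod (hD : D.IsMED) (hcod : D.cod ≤ 12) : D.mu - 1 ≤ D.cod := by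
  have hsum : ∑ v, ((D.reducedWt v).choose 2 : ℤ) ≤ 1 := by
    exact_mod_cast hD.sum_choose_reducedWt_le_one hcod
  rw [hD.mu_eq_cod_add_sum]
  linarith

theorem card_isFree_wt_eq_one_le_card_isSatellite (hD : D.IsMED) :
    #{v | D.IsFree v ∧ D.wt v = 1} ≤ #{v | D.IsSatellite v} := by
  refine card_le_card_of_forall_subsingleton D.ImPred (fun v hv => ?_)
    fun w _ v hv v' hv' => hv.2.left_unique hv'.2
  obtain ⟨-, hfree, hwt⟩ := mem_filter.1 hv
  obtain ⟨w, hvw, hw⟩ := hD.exists_isSatellite_of_isFree_of_wt_eq_one hfree hwt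
  exact ⟨w, by simpa using hw, hvw⟩

theorem choose_add_ite_le_three_mul_vertexCod_add_ite (hD : D.IsMED) (v : Fin D.n) :
    (D.wt v + 1).choose 2 + (if D.IsSatellite v then 1 else 0) ≤
      3 * D.vertexCod v + if D.IsFree v ∧ D.wt v = 1 then 1 else 0 := by
  have hcod := hD.vertexCod_add_two v
  have choose_two_le : 2 ≤ D.wt v → 3 ≤ (D.wt v + 1).choose 2 := fun h =>
    Nat.choose_le_choose 2 (Nat.succ_le_succ h)
  rcases hD.vertex_trichotomy v with ⟨-, hf, hp, hm⟩ | ⟨-, hf, hp, hm⟩ | ⟨-, hs, hp, hm⟩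
  · have hs : ¬ D.IsSatellite v := hf
    have := choose_two_le hm
    simp only [hs, if_false]
    omega
  · have hs : ¬ D.IsSatellite v := hf
    rcases hm.eq_or_lt with hm | hm
    · simp [hf, hs, ← hm]
    · have := choose_two_le hm
      simp only [hs, if_false]
      omega
  · have : 1 ≤ (D.wt v + 1).choose 2 := Nat.choose_le_choose 2 (Nat.succ_le_succ hm)
    simp only [hs, if_true]
    omega

theorem degD_le_three_mul_cod (hD : D.IsMED) : (D.degD : ℤ) ≤ 3 * D.cod := by
  have hcard := hD.card_isFree_wt_eq_one_le_card_isSatellite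
  have hsum := sum_le_sum fun v (_ : v ∈ univ) =>
    hD.choose_add_ite_le_three_mul_vertexCod_add_ite v
  rw [sum_add_distrib, sum_add_distrib, ← mul_sum, ← card_filter, ← card_filter] at hsum
  have hdeg : D.degD ≤ 3 * ∑ v, D.vertexCod v := by
    rw [degD]
    omega
  rw [hD.cod_eq_sum]
  exact_mod_cast hdeg

end IsMED

end PreDiagram

/-- The bound `12` is sharp: a single root of weight `5` has `cod = 13` and `μ = 16`. -/
theorem statement13_general (D : PreDiagram) (hD : D.IsMED) :
    (D.cod ≤ 12 → D.mu - 1 ≤ D.cod) ∧ (D.degD : ℤ) ≤ 3 * D.cod :=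
  ⟨hD.mu_sub_one_le_cod, hD.degD_le_three_mul_cod⟩

open PreDiagram in
/-- Every minimal Enriques diagram `D` with `cod(D) ≤ 10` satisfies `μ(D) - 1 ≤ cod(D)`
and `deg(D) ≤ 3 · cod(D)` (Display (4.3)). -/
theorem statement13 (D : PreDiagram) (hD : D.IsMED) (hcod : D.cod ≤ 10) :
    D.mu - 1 ≤ D.cod ∧ (D.degD : ℤ) ≤ 3 * D.cod := by
  obtain ⟨mu_le, deg_le⟩ := statement13_general D hD
  exact ⟨mu_le (by linarith), deg_le⟩
end
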